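/- arXiv:1807.02661 — 2 statements merged into one kernel-verified Lean document; each statement's English description precedes it below -/
import Mathlib

section
/- Suppose L = lim_{V→∞} f'(V) is finite. Then as V₁ → 0⁺, V*(V₁) converges to −V̄, where V̄ is the unique real number with f'(V̄) = L/2. Moreover, if M = lim_{V→∞} (f(2V) − 2f(V)) is also finite, then 2f(V₁/2) − f(V*(V₁)) − f(V*(V₁) + V₁) − V*(V₁)·L − M converges to 2f(0) − 2f(V̄) + V̄·L − M as V₁ → 0⁺. -/
open Filter Set

/-!
If `g` is strictly increasing and `g u + g (u + v) = 2 g a` with `v > 0`, then `g a` lies strictly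
between `g u` and `g (u + v)`, so `a - v < u < a`. Applied to `g = f'`, this squeezes `u` to `a` as
`v → 0⁺`; the limit of `2 f (v / 2) - f u - f (u + v) - u c` is then its value at `(u, v) = (a, 0)`.
For even `f` and `f' V̄ = c / 2`, the point is `a = -V̄`.
-/

open scoped Topology

theorem mem_Ioo_of_add_eq_add_self {α β : Type*} [LinearOrder α] [AddCommMonoid β] [PartialOrder β]
    [IsOrderedCancelAddMonoid β] {g : α → β} (hg : StrictMono g) {x y a : α} (hxy : x < y)
    (h : g x + g y = g a + g a) : a ∈ Ioo x y := by
  constructor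
  · by_contra! hax
    have hx : g a ≤ g x := hg.monotone hax
    have hy : g a < g y := hg (hax.trans_lt hxy)
    exact (add_lt_add_of_le_of_lt hx hy).ne' h
  · by_contra! hya
    have hx : g x < g a := hg (hxy.trans_le hya)
    have hy : g y ≤ g a := hg.monotone hya
    exact (add_lt_add_of_lt_of_le hx hy).ne h

theorem tendsto_of_add_eq_add_self {ι α β : Type*} [AddCommGroup α] [LinearOrder α]
    [IsOrderedAddMonoid α] [TopologicalSpace α] [OrderTopology α]
    [AddCommMonoid β] [PartialOrder β] [IsOrderedCancelAddMonoid β]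
    {l : Filter ι} {g : α → β} (hg : StrictMono g) {u v : ι → α} {a : α}
    (hv : Tendsto v l (𝓝[>] 0)) (h : ∀ᶠ i in l, g (u i) + g (u i + v i) = g a + g a) :
    Tendsto u l (𝓝 a) := by
  have hv_zero : Tendsto v l (𝓝 0) := hv.mono_right nhdsWithin_le_nhds
  have hv_pos : ∀ᶠ i in l, 0 < v i := hv.eventually self_mem_nhdsWithin
  have h_mem : ∀ᶠ i in l, a ∈ Ioo (u i) (u i + v i) := by
    filter_upwards [hv_pos, h] with i hi hgi
    exact mem_Ioo_of_add_eq_add_self hg (lt_add_of_pos_right _ hi) hgi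
  have h_lower : Tendsto (fun i => a - v i) l (𝓝 a) := by
    simpa only [sub_zero] using hv_zero.const_sub a
  exact tendsto_of_tendsto_of_tendsto_of_le_of_le' h_lower tendsto_const_nhds
    (h_mem.mono fun _ hi => (sub_lt_iff_lt_add.2 hi.2).le) (h_mem.mono fun _ hi => hi.1.le)

theorem odd_deriv_of_even {𝕜 F : Type*} [NontriviallyNormedField 𝕜] [NormedAddCommGroup F]
    [NormedSpace 𝕜 F] {f : 𝕜 → F} (hf : f.Even) : (deriv f).Odd := fun x => by
  rw [← neg_eq_iff_eq_neg, ← deriv_comp_neg, funext hf]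

theorem stmt_10_general {f : ℝ → ℝ} (hf_conv : StrictConvexOn ℝ univ f)
    (hf_diff : Differentiable ℝ f) {c a : ℝ} (ha : deriv f a = -c / 2) {u : ℝ → ℝ}
    (hu : ∀ v, 0 < v → deriv f (u v) + deriv f (u v + v) = -c) :
    Tendsto u (𝓝[>] 0) (𝓝 a) ∧
      Tendsto (fun v => 2 * f (v / 2) - f (u v) - f (u v + v) - u v * c) (𝓝[>] 0)
        (𝓝 (2 * f 0 - 2 * f a - a * c)) := by
  have hf_mono : StrictMono (deriv f) :=
    strictMonoOn_univ.1 (hf_conv.strictMonoOn_deriv fun x _ => hf_diff x)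
  have hu_lim : Tendsto u (𝓝[>] 0) (𝓝 a) := by
    refine tendsto_of_add_eq_add_self hf_mono tendsto_id ?_
    filter_upwards [self_mem_nhdsWithin] with v hv
    rw [id, hu v hv, ha, add_halves]
  have h_pair : Tendsto (fun v => (u v, v)) (𝓝[>] 0) (𝓝 (a, 0)) :=
    hu_lim.prodMk_nhds nhdsWithin_le_nhds
  have hf_cont : Continuous f := hf_diff.continuous
  have h_cont : Continuous fun p : ℝ × ℝ =>
      2 * f (p.2 / 2) - f p.1 - f (p.1 + p.2) - p.1 * c := by
    fun_prop
  have h_lim := (h_cont.tendsto (a, 0)).comp h_pair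
  have h_value : 2 * f (0 / 2) - f a - f (a + 0) - a * c = 2 * f 0 - 2 * f a - a * c := by
    rw [zero_div, add_zero]
    ring
  rw [h_value] at h_lim
  exact ⟨hu_lim, h_lim⟩

/-- Suppose L = lim_{V→∞} f'(V) is finite. Then as V₁ → 0⁺, V*(V₁)
converges to −V̄, where V̄ is the unique real number with f'(V̄) = L/2. Moreover,
if M = lim_{V→∞} (f(2V) − 2f(V)) is also finite, then
2f(V₁/2) − f(V*(V₁)) − f(V*(V₁) + V₁) − V*(V₁)·L − M converges to
2f(0) − 2f(V̄) + V̄·L − M as V₁ → 0⁺. -/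
theorem stmt_10 (f : ℝ → ℝ)
    (hf_even : ∀ x, f (-x) = f x)
    (hf_conv : StrictConvexOn ℝ Set.univ f)
    (hf_smooth : ContDiff ℝ 1 f)
    (hf_pos : ∀ x, 0 < f x)
    (L : ℝ) (hL : Tendsto (deriv f) atTop (nhds L))
    (Vs : ℝ → ℝ)
    (hVs : ∀ V₁ : ℝ, 0 < V₁ → deriv f (Vs V₁) + deriv f (Vs V₁ + V₁) = -L)
    (Vbar : ℝ) (hVbar : deriv f Vbar = L / 2) :
    Tendsto Vs (nhdsWithin 0 (Set.Ioi 0)) (nhds (-Vbar)) ∧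
    ∀ M : ℝ, Tendsto (fun V : ℝ => f (2 * V) - 2 * f V) atTop (nhds M) →
      Tendsto (fun V₁ => 2 * f (V₁ / 2) - f (Vs V₁) - f (Vs V₁ + V₁) - Vs V₁ * L - M)
        (nhdsWithin 0 (Set.Ioi 0))
        (nhds (2 * f 0 - 2 * f Vbar + Vbar * L - M)) := by
  have h_neg : deriv f (-Vbar) = -L / 2 := by
    rw [odd_deriv_of_even hf_even, hVbar, neg_div]
  obtain ⟨hVs_lim, h_lim⟩ :=
    stmt_10_general hf_conv (hf_smooth.differentiable one_ne_zero) h_neg hVs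
  rw [hf_even, neg_mul, sub_neg_eq_add] at h_lim
  exact ⟨hVs_lim, fun M _ => h_lim.sub_const M⟩
end

section
/- The following are equivalent: (i) μ(V₁, V₂) > 0 for all 0 < V₁ ≤ V₂ (that is, the blowup time V₀ is zero, so the double interval strictly beats the triple interval for all prescribed volumes); (ii) L = lim_{V→∞} f'(V) is finite, M = lim_{V→∞} (f(2V) − 2f(V)) is finite, and 2f(0) − 2f(V̄) + V̄·L − M ≥ 0, where V̄ is the unique real number with f'(V̄) = L/2. -/
open Filter Set

/-- The perimeter difference μ(V₁,V₂) between the triple interval and the double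
interval, expressed via the equilibrium point Ṽ = Vt V₁ V₂. -/
noncomputable def mu (f : ℝ → ℝ) (Vt : ℝ → ℝ → ℝ) (V₁ V₂ : ℝ) : ℝ :=
  2 * f (V₁ / 2) + 2 * f ((V₁ + V₂) / 2)
    - f (Vt V₁ V₂) - f (Vt V₁ V₂ + V₁) - f (Vt V₁ V₂ + V₁ + V₂)

/-!
The equilibrium position minimises the perimeter of the double interval, so `0 < mu` says that some
admissible double interval is shorter than the triple interval.

If this holds for all volumes, fix `V₁` and let `V₂ → ∞`. Convexity keeps the middle endpoint of the
double interval bounded, and equilibrium then bounds `f'`, so `L` is finite. Bounding `f` from below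
by its tangent of slope `-L / 2` at the two left endpoints, using `f' ≤ L` at the right endpoint,
and then letting `V₁ → 0` with `V₁ + V₂ = 2 * W` fixed, gives
`f (2 * W) - 2 * f W ≤ 2 * f 0 - 2 * f b + b * L` with `f' b = L / 2`. The left side increases
with `W`, hence converges to some `M` satisfying the same bound.

Conversely, `u ↦ f (2 * u + t) - 2 * f u` is strictly increasing on `[-t, ∞)` with limit
`M + t * L`, hence stays strictly below it. This makes a suitable trial double interval shorter than
the triple interval: the one whose left endpoints are centred at `-b` if `2 * b ≤ V₂`, and the one
symmetric about the origin otherwise.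
-/

open scoped Topology

/-! ### Monotone functions with a limit -/

theorem lt_of_strictMonoOn_Ici_of_tendsto {α β : Type*} [LinearOrder α] [NoMaxOrder α]
    [TopologicalSpace β] [Preorder β] [OrderClosedTopology β] {g : α → β} {a x : α} {l : β}
    (hg : StrictMonoOn g (Ici a)) (hl : Tendsto g atTop (𝓝 l)) (hx : a ≤ x) : g x < l := by
  obtain ⟨y, hxy⟩ := exists_gt x
  have hy : a ≤ y := hx.trans hxy.le
  have : Nonempty α := ⟨a⟩
  refine (hg hx hy hxy).trans_le (ge_of_tendsto hl ?_)
  filter_upwards [eventually_ge_atTop y] with z hz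
  exact hg.monotoneOn hy (hy.trans hz) hz

theorem exists_tendsto_of_monotoneOn_Ici {α β : Type*} [LinearOrder α]
    [ConditionallyCompleteLattice β] [TopologicalSpace β] [SupConvergenceClass β]
    {g : α → β} {a : α} {c : β} (hg : MonotoneOn g (Ici a)) (hc : ∀ x, a ≤ x → g x ≤ c) :
    ∃ l ≤ c, Tendsto g atTop (𝓝 l) := by
  have hmono : Monotone fun x => g (max a x) := fun x y hxy =>
    hg (le_max_left a x) (le_max_left a y) (max_le_max le_rfl hxy)
  have hle : ∀ x, g (max a x) ≤ c := fun x => hc _ (le_max_left a x)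
  have : Nonempty α := ⟨a⟩
  refine ⟨⨆ x, g (max a x), ciSup_le hle,
    (tendsto_atTop_ciSup hmono ⟨c, forall_mem_range.2 hle⟩).congr' ?_⟩
  filter_upwards [eventually_ge_atTop a] with x hx
  rw [max_eq_right hx]

/-! ### Convex functions -/

theorem map_add_map_le_of_mem_segment {E : Type*} [AddCommGroup E] [Module ℝ E] {S : Set E}
    {f : E → ℝ} (hf : ConvexOn ℝ S f) {a b x : E} (ha : a ∈ S) (hb : b ∈ S)
    (hx : x ∈ segment ℝ a b) : f x + f (a + b - x) ≤ f a + f b := by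
  obtain ⟨p, q, hp, hq, hpq, rfl⟩ := hx
  have hreflect : a + b - (p • a + q • b) = q • a + p • b := by
    rw [← eq_sub_iff_add_eq'] at hpq
    subst hpq
    module
  have h₁ := hf.2 ha hb hp hq hpq
  have h₂ := hf.2 ha hb hq hp (by rwa [add_comm])
  simp only [smul_eq_mul] at h₁ h₂
  rw [hreflect]
  linear_combination h₁ + h₂ + (f a + f b) * hpq

theorem map_le_map_of_even_of_abs_le {f : ℝ → ℝ} (heven : f.Even) (hf : ConvexOn ℝ univ f)
    {x y : ℝ} (h : |x| ≤ |y|) : f x ≤ f y := by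
  have hx : x ∈ segment ℝ (-|y|) |y| := by
    rw [segment_eq_Icc (neg_le_self (abs_nonneg y))]
    exact abs_le.1 h
  have habs : f |y| = f y := by
    rcases abs_choice y with hy | hy <;> rw [hy]
    exact heven y
  simpa only [heven |y|, max_self, habs] using hf.le_on_segment (mem_univ _) (mem_univ _) hx

theorem add_deriv_mul_sub_le_of_convexOn {S : Set ℝ} {f : ℝ → ℝ} (hf : ConvexOn ℝ S f) {x y : ℝ}
    (hx : x ∈ S) (hy : y ∈ S) (hd : DifferentiableAt ℝ f x) :
    f x + deriv f x * (y - x) ≤ f y := by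
  rcases lt_trichotomy x y with hxy | rfl | hxy
  · have h := hf.deriv_le_slope hx hy hxy hd
    rw [slope_def_field, le_div_iff₀ (sub_pos.2 hxy)] at h
    linarith
  · simp
  · have h := hf.slope_le_deriv hy hx hxy hd
    rw [slope_def_field, div_le_iff₀ (sub_pos.2 hxy)] at h
    linarith

theorem tendsto_atTop_of_convexOn_of_deriv_pos {f : ℝ → ℝ} (hf : ConvexOn ℝ univ f) {x : ℝ}
    (hx : 0 < deriv f x) : Tendsto f atTop atTop := by
  have hline : Tendsto (fun y => f x + deriv f x * (y - x)) atTop atTop :=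
    tendsto_atTop_add_const_left _ _
      ((tendsto_atTop_add_const_right _ (-x) tendsto_id).const_mul_atTop hx)
  exact tendsto_atTop_mono (fun y => add_deriv_mul_sub_le_of_convexOn hf (mem_univ x) (mem_univ y)
    (differentiableAt_of_deriv_ne_zero hx.ne')) hline

theorem odd_deriv_of_even_s16 {f : ℝ → ℝ} (heven : f.Even) : (deriv f).Odd := by
  intro x
  have h := deriv_comp_neg f x
  rw [funext heven] at h
  linarith

theorem strictMono_deriv_of_strictConvexOn {f : ℝ → ℝ} (hf : StrictConvexOn ℝ univ f)
    (hd : Differentiable ℝ f) : StrictMono (deriv f) :=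
  strictMonoOn_univ.1 (hf.strictMonoOn_deriv fun x _ => hd x)

theorem exists_deriv_eq_of_tendsto {f : ℝ → ℝ} (hd : Differentiable ℝ f) {L m a : ℝ}
    (hL : Tendsto (deriv f) atTop (𝓝 L)) (ha : deriv f a ≤ m) (hm : m < L) :
    ∃ x, deriv f x = m := by
  obtain ⟨c, hc⟩ := (hL.eventually_const_lt hm).exists
  have hrange : (deriv f '' univ).OrdConnected := ordConnected_univ.image_deriv fun x _ => hd x
  rw [image_univ] at hrange
  exact hrange.out (mem_range_self a) (mem_range_self c) ⟨ha, hc.le⟩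

theorem tendsto_shift_sub_of_tendsto_deriv {f : ℝ → ℝ} (hf : ConvexOn ℝ univ f)
    (hd : Differentiable ℝ f) {L : ℝ} (hL : Tendsto (deriv f) atTop (𝓝 L)) (t : ℝ) :
    Tendsto (fun x => f (x + t) - f x) atTop (𝓝 (L * t)) := by
  have htangent (x y : ℝ) := add_deriv_mul_sub_le_of_convexOn hf (mem_univ x) (mem_univ y) (hd x)
  have hshift : Tendsto (fun x => deriv f (x + t)) atTop (𝓝 L) :=
    hL.comp (tendsto_atTop_add_const_right _ t tendsto_id)
  refine tendsto_of_tendsto_of_tendsto_of_le_of_le (hL.mul_const t) (hshift.mul_const t) ?_ ?_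
  · intro x
    linarith [htangent x (x + t)]
  · intro x
    linarith [htangent (x + t) x]

theorem strictMonoOn_map_two_mul_add_sub {f : ℝ → ℝ} (hf : StrictConvexOn ℝ univ f)
    (hd : Differentiable ℝ f) (t : ℝ) :
    StrictMonoOn (fun u => f (2 * u + t) - 2 * f u) (Ici (-t)) := by
  have hderiv (u : ℝ) : HasDerivAt (fun u => f (2 * u + t) - 2 * f u)
      (deriv f (2 * u + t) * 2 - 2 * deriv f u) u := by
    have hlin : HasDerivAt (fun u : ℝ => 2 * u + t) 2 u := by
      simpa using ((hasDerivAt_id u).const_mul 2).add_const t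
    exact ((hd _).hasDerivAt.comp u hlin).sub ((hd u).hasDerivAt.const_mul 2)
  refine strictMonoOn_of_deriv_pos (convex_Ici _)
    (fun u _ => (hderiv u).continuousAt.continuousWithinAt) fun u hu => ?_
  rw [interior_Ici, mem_Ioi] at hu
  have hlt : deriv f u < deriv f (2 * u + t) :=
    strictMono_deriv_of_strictConvexOn hf hd (by linarith)
  rw [(hderiv u).deriv]
  linarith

theorem map_two_mul_add_sub_lt_of_tendsto {f : ℝ → ℝ} (hf : StrictConvexOn ℝ univ f)
    (hd : Differentiable ℝ f) {L M t u : ℝ} (hL : Tendsto (deriv f) atTop (𝓝 L))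
    (hM : Tendsto (fun V => f (2 * V) - 2 * f V) atTop (𝓝 M)) (hu : -t ≤ u) :
    f (2 * u + t) - 2 * f u < M + L * t := by
  have hdouble : Tendsto (fun u : ℝ => 2 * u) atTop atTop :=
    tendsto_id.const_mul_atTop two_pos
  have hlim : Tendsto (fun u => f (2 * u + t) - 2 * f u) atTop (𝓝 (M + L * t)) :=
    (hM.add ((tendsto_shift_sub_of_tendsto_deriv hf.convexOn hd hL t).comp hdouble)).congr
      fun u => by simp only [Function.comp_apply]; ring
  exact lt_of_strictMonoOn_Ici_of_tendsto (g := fun u => f (2 * u + t) - 2 * f u)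
    (strictMonoOn_map_two_mul_add_sub hf hd t) hlim hu

/-! ### Double and triple intervals -/

/-- The perimeter of the double interval in position `t`: two adjacent intervals of volumes `V₁`
and `V₂`, with endpoints `t`, `t + V₁` and `t + V₁ + V₂` in volume coordinates. -/
def doublePerimeter (f : ℝ → ℝ) (V₁ V₂ t : ℝ) : ℝ :=
  f t + f (t + V₁) + f (t + V₁ + V₂)

/-- The perimeter of the triple interval: an interval of volume `V₁` centred at the origin, flanked
by two intervals of volume `V₂ / 2`. The endpoints `±V₁ / 2` and `±(V₁ + V₂) / 2` are paired,
as the density `f` is even. -/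
noncomputable def triplePerimeter (f : ℝ → ℝ) (V₁ V₂ : ℝ) : ℝ :=
  2 * f (V₁ / 2) + 2 * f ((V₁ + V₂) / 2)

/-- The double interval in position `t` is in equilibrium: the `t`-derivative of its perimeter
vanishes. -/
def IsEquilibrium (f : ℝ → ℝ) (V₁ V₂ t : ℝ) : Prop :=
  deriv f t + deriv f (t + V₁) + deriv f (t + V₁ + V₂) = 0

theorem mu_pos_iff {f : ℝ → ℝ} {Vt : ℝ → ℝ → ℝ} {V₁ V₂ : ℝ} :
    0 < mu f Vt V₁ V₂ ↔ doublePerimeter f V₁ V₂ (Vt V₁ V₂) < triplePerimeter f V₁ V₂ := by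
  rw [mu, doublePerimeter, triplePerimeter, sub_sub, sub_sub, sub_pos, add_assoc (f _)]

section Equilibrium

variable {f : ℝ → ℝ} {V₁ V₂ t : ℝ}

theorem doublePerimeter_le_of_isEquilibrium (hf : ConvexOn ℝ univ f) (hd : Differentiable ℝ f)
    (ht : IsEquilibrium f V₁ V₂ t) (s : ℝ) :
    doublePerimeter f V₁ V₂ t ≤ doublePerimeter f V₁ V₂ s := by
  have htangent (x y : ℝ) := add_deriv_mul_sub_le_of_convexOn hf (mem_univ x) (mem_univ y) (hd x)
  rw [IsEquilibrium] at ht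
  rw [doublePerimeter, doublePerimeter]
  linear_combination htangent t s + htangent (t + V₁) (s + V₁)
    + htangent (t + V₁ + V₂) (s + V₁ + V₂) - (s - t) * ht

theorem neg_of_isEquilibrium (heven : f.Even) (hf : StrictConvexOn ℝ univ f)
    (hd : Differentiable ℝ f) (hV₁ : 0 < V₁) (hV₂ : 0 < V₂) (ht : IsEquilibrium f V₁ V₂ t) :
    t < 0 := by
  have hmono := strictMono_deriv_of_strictConvexOn hf hd
  have h₁ : deriv f t < deriv f (t + V₁) := hmono (by linarith)
  have h₂ : deriv f t < deriv f (t + V₁ + V₂) := hmono (by linarith)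
  rw [IsEquilibrium] at ht
  rw [← hmono.lt_iff_lt, (odd_deriv_of_even_s16 heven).map_zero]
  linarith

end Equilibrium

/-! ### Necessity of the criterion -/

section Necessity

variable {f : ℝ → ℝ}

theorem map_middle_lt_of_doublePerimeter_lt (heven : f.Even) (hf : ConvexOn ℝ univ f)
    {V₁ V₂ t : ℝ} (h : doublePerimeter f V₁ V₂ t < triplePerimeter f V₁ V₂) :
    f (t + V₁) < 2 * f (V₁ / 2) := by
  have hmid := map_add_map_le_of_mem_segment hf (mem_univ (-t)) (mem_univ (t + V₁ + V₂))
    (midpoint_mem_segment _ _)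
  have hmidpoint : midpoint ℝ (-t) (t + V₁ + V₂) = (V₁ + V₂) / 2 := by
    rw [midpoint_eq_smul_add, invOf_eq_inv, smul_eq_mul]
    ring
  rw [hmidpoint, show -t + (t + V₁ + V₂) - (V₁ + V₂) / 2 = (V₁ + V₂) / 2 by ring, heven] at hmid
  rw [doublePerimeter, triplePerimeter] at h
  linarith

theorem bddAbove_range_deriv_of_doublePerimeter_lt (heven : f.Even)
    (hf : StrictConvexOn ℝ univ f) (hd : Differentiable ℝ f) {V₁ : ℝ}
    (h : ∀ V₂, V₁ ≤ V₂ →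
      ∃ t, IsEquilibrium f V₁ V₂ t ∧ doublePerimeter f V₁ V₂ t < triplePerimeter f V₁ V₂) :
    BddAbove (range (deriv f)) := by
  have hmono := strictMono_deriv_of_strictConvexOn hf hd
  have hodd := odd_deriv_of_even_s16 heven
  have hpos : 0 < deriv f 1 := hodd.map_zero ▸ hmono one_pos
  obtain ⟨C, hC₀, hC⟩ : ∃ C, 0 ≤ C ∧ 2 * f (V₁ / 2) ≤ f C :=
    ((eventually_ge_atTop 0).and ((tendsto_atTop_of_convexOn_of_deriv_pos hf.convexOn
      hpos).eventually_ge_atTop _)).exists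
  refine ⟨-deriv f (-C - V₁) - deriv f (-C), forall_mem_range.2 fun v => ?_⟩
  obtain ⟨t, ht, hlt⟩ := h (max V₁ (v + C)) (le_max_left _ _)
  have hmiddle : |t + V₁| < C := by
    by_contra! hle
    rw [← abs_of_nonneg hC₀] at hle
    have hfC := map_le_map_of_even_of_abs_le heven hf.convexOn hle
    linarith [map_middle_lt_of_doublePerimeter_lt heven hf.convexOn hlt]
  have hleft : -C < t + V₁ := (abs_lt.1 hmiddle).1
  have h₁ : deriv f (-C - V₁) < deriv f t := hmono (by linarith)
  have h₂ : deriv f (-C) < deriv f (t + V₁) := hmono hleft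
  have h₃ : deriv f v < deriv f (t + V₁ + max V₁ (v + C)) :=
    hmono (by linarith [le_max_right V₁ (v + C)])
  rw [IsEquilibrium] at ht
  linarith

theorem le_doublePerimeter_of_nonpos (heven : f.Even) (hf : ConvexOn ℝ univ f)
    (hd : Differentiable ℝ f) {L b V₁ V₂ t : ℝ} (hL : deriv f (V₁ + V₂) ≤ L)
    (hb : deriv f b = L / 2) (ht : t ≤ 0) :
    f (V₁ + V₂) + 2 * f b - b * L - L * V₁ / 2 ≤ doublePerimeter f V₁ V₂ t := by
  have htangent (x y : ℝ) := add_deriv_mul_sub_le_of_convexOn hf (mem_univ x) (mem_univ y) (hd x)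
  have h₁ := htangent (-b) t
  have h₂ := htangent (-b) (t + V₁)
  rw [heven, odd_deriv_of_even_s16 heven, hb] at h₁ h₂
  have h₃ : f (V₁ + V₂) + L * t ≤ f (t + V₁ + V₂) := by
    linarith [htangent (V₁ + V₂) (t + V₁ + V₂), mul_le_mul_of_nonpos_right hL ht]
  rw [doublePerimeter]
  linarith

theorem map_two_mul_sub_le_of_doublePerimeter_lt (heven : f.Even) (hf : ConvexOn ℝ univ f)
    (hd : Differentiable ℝ f) {L b W : ℝ} (hL : ∀ x, deriv f x ≤ L) (hb : deriv f b = L / 2)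
    (hW : 0 < W)
    (h : ∀ V₁ V₂, 0 < V₁ → V₁ ≤ V₂ →
      ∃ t ≤ 0, doublePerimeter f V₁ V₂ t < triplePerimeter f V₁ V₂) :
    f (2 * W) - 2 * f W ≤ 2 * f 0 - 2 * f b + b * L := by
  have hbound : ∀ V ∈ Ioc 0 W,
      f (2 * W) - 2 * f W ≤ 2 * f (V / 2) - 2 * f b + b * L + L * V / 2 := by
    intro V hV
    obtain ⟨t, ht, hlt⟩ := h V (2 * W - V) hV.1 (by linarith [hV.2])
    have hle := le_doublePerimeter_of_nonpos heven hf hd (hL (V + (2 * W - V))) hb ht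
    rw [triplePerimeter] at hlt
    rw [add_sub_cancel] at hle hlt
    rw [mul_div_cancel_left₀ W two_ne_zero] at hlt
    linarith
  have hcont : Continuous fun V => 2 * f (V / 2) - 2 * f b + b * L + L * V / 2 := by
    have := hd.continuous
    fun_prop
  have hlim : Tendsto (fun V => 2 * f (V / 2) - 2 * f b + b * L + L * V / 2) (𝓝[>] 0)
      (𝓝 (2 * f 0 - 2 * f b + b * L)) := by
    simpa using (hcont.tendsto 0).mono_left nhdsWithin_le_nhds
  exact ge_of_tendsto hlim (mem_of_superset (Ioc_mem_nhdsGT hW) hbound)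

theorem exists_limits_of_doublePerimeter_lt (heven : f.Even) (hf : StrictConvexOn ℝ univ f)
    (hd : Differentiable ℝ f)
    (h : ∀ V₁ V₂, 0 < V₁ → V₁ ≤ V₂ →
      ∃ t, IsEquilibrium f V₁ V₂ t ∧ doublePerimeter f V₁ V₂ t < triplePerimeter f V₁ V₂) :
    ∃ L M b : ℝ, Tendsto (deriv f) atTop (𝓝 L) ∧
      Tendsto (fun V => f (2 * V) - 2 * f V) atTop (𝓝 M) ∧
      deriv f b = L / 2 ∧ 0 ≤ 2 * f 0 - 2 * f b + b * L - M := by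
  have hmono := strictMono_deriv_of_strictConvexOn hf hd
  have hbdd : BddAbove (range (deriv f)) :=
    bddAbove_range_deriv_of_doublePerimeter_lt heven hf hd (h 1 · one_pos)
  obtain ⟨L, hL⟩ : ∃ L, Tendsto (deriv f) atTop (𝓝 L) :=
    ⟨_, tendsto_atTop_ciSup hmono.monotone hbdd⟩
  have hderiv_zero : deriv f 0 = 0 := (odd_deriv_of_even_s16 heven).map_zero
  have hL_pos : 0 < L :=
    hderiv_zero ▸ lt_of_strictMonoOn_Ici_of_tendsto (hmono.strictMonoOn _) hL le_rfl
  obtain ⟨b, hb⟩ : ∃ b, deriv f b = L / 2 :=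
    exists_deriv_eq_of_tendsto hd hL (hderiv_zero.trans_le (half_pos hL_pos).le)
      (half_lt_self hL_pos)
  have hnonpos : ∀ V₁ V₂, 0 < V₁ → V₁ ≤ V₂ →
      ∃ t ≤ 0, doublePerimeter f V₁ V₂ t < triplePerimeter f V₁ V₂ := fun V₁ V₂ hV₁ hV =>
    let ⟨t, ht, hlt⟩ := h V₁ V₂ hV₁ hV
    ⟨t, (neg_of_isEquilibrium heven hf hd hV₁ (hV₁.trans_le hV) ht).le, hlt⟩
  have hincreasing : MonotoneOn (fun V => f (2 * V) - 2 * f V) (Ici 1) := by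
    have hon := (strictMonoOn_map_two_mul_add_sub hf hd 0).monotoneOn
    simp only [add_zero, neg_zero] at hon
    exact hon.mono (Ici_subset_Ici.2 zero_le_one)
  obtain ⟨M, hM_le, hM⟩ := exists_tendsto_of_monotoneOn_Ici hincreasing fun W hW =>
    map_two_mul_sub_le_of_doublePerimeter_lt heven hf.convexOn hd
      (hmono.monotone.ge_of_tendsto hL) hb (one_pos.trans_le hW) hnonpos
  exact ⟨L, M, b, hL, hM, hb, sub_nonneg.2 hM_le⟩

end Necessity

/-! ### Sufficiency of the criterion -/

section Sufficiency

variable {f : ℝ → ℝ} {L M b V₁ V₂ : ℝ}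

theorem doublePerimeter_lt_triplePerimeter_of_two_mul_le (heven : f.Even)
    (hf : StrictConvexOn ℝ univ f) (hd : Differentiable ℝ f)
    (hL : Tendsto (deriv f) atTop (𝓝 L))
    (hM : Tendsto (fun V => f (2 * V) - 2 * f V) atTop (𝓝 M))
    (hcrit : M ≤ 2 * f 0 - 2 * f b + b * L) (hb : 0 ≤ b) (hV₁ : 0 < V₁) (hV₂ : 2 * b ≤ V₂) :
    doublePerimeter f V₁ V₂ (-(b + V₁ / 2)) < triplePerimeter f V₁ V₂ := by
  have hright : f (V₁ / 2 + V₂ - b) - 2 * f ((V₁ + V₂) / 2) < M - L * (b + V₁ / 2) := by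
    have h := map_two_mul_add_sub_lt_of_tendsto hf hd (t := -(b + V₁ / 2)) (u := (V₁ + V₂) / 2)
      hL hM (by linarith)
    rw [show 2 * ((V₁ + V₂) / 2) + -(b + V₁ / 2) = V₁ / 2 + V₂ - b by ring] at h
    linarith
  have hmiddle : f (V₁ / 2 - b) + f 0 ≤ f b + f (V₁ / 2) := by
    have hmem : (0 : ℝ) ∈ segment ℝ (-b) (V₁ / 2) := by
      rw [segment_eq_Icc (by linarith)]
      exact ⟨by linarith, by linarith⟩
    have h := map_add_map_le_of_mem_segment hf.convexOn (mem_univ _) (mem_univ _) hmem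
    rwa [sub_zero, neg_add_eq_sub, heven, add_comm (f 0)] at h
  have hleft : f (b + V₁ / 2) ≤ f b + L * (V₁ / 2) := by
    have hslope : deriv f (b + V₁ / 2) ≤ L :=
      (strictMono_deriv_of_strictConvexOn hf hd).monotone.ge_of_tendsto hL _
    linarith [mul_le_mul_of_nonneg_right hslope (half_pos hV₁).le,
      add_deriv_mul_sub_le_of_convexOn hf.convexOn (mem_univ (b + V₁ / 2)) (mem_univ b) (hd _)]
  have hzero : f 0 ≤ f (V₁ / 2) := map_le_map_of_even_of_abs_le heven hf.convexOn (by simp)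
  rw [doublePerimeter, triplePerimeter, heven,
    show -(b + V₁ / 2) + V₁ = V₁ / 2 - b by ring,
    show V₁ / 2 - b + V₂ = V₁ / 2 + V₂ - b by ring]
  linarith

theorem doublePerimeter_lt_triplePerimeter_of_le_two_mul (heven : f.Even)
    (hf : StrictConvexOn ℝ univ f) (hd : Differentiable ℝ f)
    (hL : Tendsto (deriv f) atTop (𝓝 L))
    (hM : Tendsto (fun V => f (2 * V) - 2 * f V) atTop (𝓝 M))
    (hcrit : M ≤ 2 * f 0 - 2 * f b + b * L) (hV : V₁ ≤ V₂) (hV₂ : V₂ ≤ V₁ + 2 * b) :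
    doublePerimeter f V₁ V₂ (-((V₁ + V₂) / 2)) < triplePerimeter f V₁ V₂ := by
  have hb : f b < 2 * f 0 := by
    have h := map_two_mul_add_sub_lt_of_tendsto hf hd (t := -b) (u := b) hL hM (by simp)
    rw [show 2 * b + -b = b by ring] at h
    linarith
  have hmiddle : f ((V₁ - V₂) / 2) ≤ f b := by
    refine map_le_map_of_even_of_abs_le heven hf.convexOn ?_
    rw [abs_of_nonpos (by linarith)]
    exact le_trans (by linarith) (le_abs_self b)
  have hzero : f 0 ≤ f (V₁ / 2) := map_le_map_of_even_of_abs_le heven hf.convexOn (by simp)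
  rw [doublePerimeter, triplePerimeter, heven,
    show -((V₁ + V₂) / 2) + V₁ = (V₁ - V₂) / 2 by ring,
    show (V₁ - V₂) / 2 + V₂ = (V₁ + V₂) / 2 by ring]
  linarith

theorem exists_doublePerimeter_lt_triplePerimeter (heven : f.Even)
    (hf : StrictConvexOn ℝ univ f) (hd : Differentiable ℝ f)
    (hL : Tendsto (deriv f) atTop (𝓝 L))
    (hM : Tendsto (fun V => f (2 * V) - 2 * f V) atTop (𝓝 M)) (hb : deriv f b = L / 2)
    (hcrit : M ≤ 2 * f 0 - 2 * f b + b * L) (hV₁ : 0 < V₁) (hV : V₁ ≤ V₂) :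
    ∃ t, doublePerimeter f V₁ V₂ t < triplePerimeter f V₁ V₂ := by
  have hmono := strictMono_deriv_of_strictConvexOn hf hd
  have hderiv_zero : deriv f 0 = 0 := (odd_deriv_of_even_s16 heven).map_zero
  have hb_nonneg : 0 ≤ b := by
    rw [← hmono.le_iff_le, hderiv_zero, hb]
    exact div_nonneg (hderiv_zero ▸ hmono.monotone.ge_of_tendsto hL 0) zero_le_two
  rcases le_total (2 * b) V₂ with hV₂ | hV₂
  · exact ⟨_, doublePerimeter_lt_triplePerimeter_of_two_mul_le heven hf hd hL hM hcrit
      hb_nonneg hV₁ hV₂⟩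
  · exact ⟨_, doublePerimeter_lt_triplePerimeter_of_le_two_mul heven hf hd hL hM hcrit hV
      (by linarith)⟩

end Sufficiency

theorem stmt_16_general (f : ℝ → ℝ) (heven : f.Even) (hf : StrictConvexOn ℝ univ f)
    (hd : Differentiable ℝ f) (Vt : ℝ → ℝ → ℝ)
    (hVt : ∀ V₁ V₂, 0 < V₁ → 0 < V₂ → IsEquilibrium f V₁ V₂ (Vt V₁ V₂)) :
    (∀ V₁ V₂, 0 < V₁ → V₁ ≤ V₂ → 0 < mu f Vt V₁ V₂) ↔
      ∃ L M b : ℝ, Tendsto (deriv f) atTop (𝓝 L) ∧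
        Tendsto (fun V => f (2 * V) - 2 * f V) atTop (𝓝 M) ∧
        deriv f b = L / 2 ∧ 0 ≤ 2 * f 0 - 2 * f b + b * L - M := by
  have hequilibrium {V₁ V₂ : ℝ} (hV₁ : 0 < V₁) (hV : V₁ ≤ V₂) :
      IsEquilibrium f V₁ V₂ (Vt V₁ V₂) :=
    hVt V₁ V₂ hV₁ (hV₁.trans_le hV)
  simp only [mu_pos_iff]
  constructor
  · intro h
    exact exists_limits_of_doublePerimeter_lt heven hf hd fun V₁ V₂ hV₁ hV =>
      ⟨Vt V₁ V₂, hequilibrium hV₁ hV, h V₁ V₂ hV₁ hV⟩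
  · rintro ⟨L, M, b, hL, hM, hb, hcrit⟩ V₁ V₂ hV₁ hV
    obtain ⟨t, ht⟩ := exists_doublePerimeter_lt_triplePerimeter heven hf hd hL hM hb
      (sub_nonneg.1 hcrit) hV₁ hV
    exact (doublePerimeter_le_of_isEquilibrium hf.convexOn hd (hequilibrium hV₁ hV) t).trans_lt ht

/-- The following are equivalent: (i) μ(V₁, V₂) > 0 for all
0 < V₁ ≤ V₂ (the blowup time V₀ is zero); (ii) L = lim_{V→∞} f'(V) is finite,
M = lim_{V→∞} (f(2V) − 2f(V)) is finite, and 2f(0) − 2f(V̄) + V̄·L − M ≥ 0, where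
V̄ is the unique real number with f'(V̄) = L/2. -/
theorem stmt_16 (f : ℝ → ℝ)
    (hf_even : ∀ x, f (-x) = f x)
    (hf_conv : StrictConvexOn ℝ Set.univ f)
    (hf_smooth : ContDiff ℝ 1 f)
    (hf_pos : ∀ x, 0 < f x)
    (Vt : ℝ → ℝ → ℝ)
    (hVt : ∀ V₁ V₂ : ℝ, 0 < V₁ → 0 < V₂ →
      deriv f (Vt V₁ V₂) + deriv f (Vt V₁ V₂ + V₁) + deriv f (Vt V₁ V₂ + V₁ + V₂) = 0) :
    (∀ V₁ V₂ : ℝ, 0 < V₁ → V₁ ≤ V₂ → 0 < mu f Vt V₁ V₂) ↔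
    (∃ L M Vbar : ℝ,
      Tendsto (deriv f) atTop (nhds L) ∧
      Tendsto (fun V : ℝ => f (2 * V) - 2 * f V) atTop (nhds M) ∧
      deriv f Vbar = L / 2 ∧
      0 ≤ 2 * f 0 - 2 * f Vbar + Vbar * L - M) := by
  exact stmt_16_general f hf_even hf_conv (hf_smooth.differentiable one_ne_zero) Vt hVt
end
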